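/- Let (F,ν) be a discrete valuation field with F and k_ν of characteristic 0, and let n≥0. There is a unique ℚ-linear map ∂_ν^B: B₂(F)⊗Λ^n(Fˣ) → B₂(k_ν)⊗Λ^{n−1}(k_νˣ) such that: (1) ∂_ν^B({a}₂⊗b) = 0 for every a∈F∖{0,1} with ν(a)≠0 and every b∈Λ^n(Fˣ); and (2) ∂_ν^B({u}₂⊗b) = −{ū}₂⊗∂_ν(b) for every unit u of O_ν and every b∈Λ^n(Fˣ). Moreover, for every m≥2 the pair (∂_ν^B, ∂_ν) anticommutes with the differentials: ∂_ν(δ_m(x)) = −δ_{m−1}(∂_ν^B(x)) in Λ^{m−1}(k_νˣ) for every x∈B₂(F)⊗Λ^{m−2}(Fˣ), where for m=2 the right-hand side is 0. -/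

import Mathlib

/-!
Write `res : F → k_ν` for the residue map extended by `0` off the valuation ring. The map
to be found sends `{x}₂ ⊗ b` to `-{res x}₂ ⊗ ∂_ν(b)` for all `x`: for a unit this is condition (2),
and for `ν(x) ≠ 0` both vanish because `{0}₂ = 0`. So `∂_ν^B` can only be `-(spec ⊗ ∂_ν)`
where `spec : B₂(F) → B₂(k_ν)` sends `{x}₂` to `{res x}₂` (`isTameSymbolB_iff`); uniqueness holds
because the symbols `{x}₂` span `B₂(F)`.

Existence amounts to the fact that `spec` is well defined: the five-term elements of `F` specialize
to combinations of five-term elements of `k_ν` (`ft_spec`). By the Plücker relation a five-term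
element depends only on two cross-ratios `a`, `b` (`fiveTerm_normalize`), so it may be taken on
`(∞, 0, 1, a, b)`. If `a`, `1-a`, `b`, `1-b` are all units, the result is the five-term relation
of the residues, or `{1}₂ = 0` when the two residues agree. Otherwise `a` or `b` specializes to
`0`, `1` or `∞`. The relations `{x⁻¹}₂ = -{x}₂` and `{1-x}₂ = -{x}₂` in `B₂` make the five-term
expression antisymmetric under permuting `∞, 0, 1` and under exchanging `a` and `b`, so it may be
assumed that `ν(a) > 0`; then the terms vanish or cancel in pairs.

For the chain map property, `∂_ν` is made explicit: it is contraction with the linear form `ν`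
followed by the specialization `Fˣ → k_νˣ` attached to a uniformizer (`tame_unique`). This holds
because `Λ^{n+1}(Fˣ)` is spanned by `x ∧ u₁ ∧ … ∧ u_n` with `u₁, …, u_n` units, as follows from
`x ∧ y = π ∧ (ν(x) y₀ - ν(y) x₀) + x₀ ∧ y₀` for a uniformizer `π`, with `x₀`, `y₀` the unit
parts. The contraction is an antiderivation, so `∂_ν(a ∧ (1-a) ∧ b)` can be computed on the nose (`tame_steinberg`): it is
`ā ∧ (1-ā) ∧ ∂_ν(b)` when `a` is a unit, and it vanishes otherwise, because then `1-a` either is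
a unit of residue `1` or is `-a` times such a unit, and `-1` is torsion.
-/

open scoped TensorProduct

set_option maxHeartbeats 1000000
set_option synthInstance.maxHeartbeats 1000000

noncomputable section

/-! ## The ℚ-vector space `G ⊗ ℚ` attached to a multiplicative abelian group `G`,
and its exterior powers `Λ^n(G)`. -/

/-- `G ⊗_ℤ ℚ` for a multiplicative abelian group `G`. -/
abbrev QW (G : Type*) [CommGroup G] : Type _ := ℚ ⊗[ℤ] (Additive G)

/-- The image of `g : G` in `G ⊗ ℚ`. -/
def toQ {G : Type*} [CommGroup G] (g : G) : QW G :=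
  (1 : ℚ) ⊗ₜ[ℤ] (Additive.ofMul g)

open Classical in
/-- The image of a nonzero field element in `Eˣ ⊗ ℚ` (zero is sent to zero). -/
def toQF {E : Type*} [Field E] (x : E) : QW Eˣ :=
  if h : x = 0 then 0 else toQ (Units.mk0 x h)

/-- `Λ^n(G)`: the `n`-th exterior power over `ℚ` of `G ⊗ ℚ`. -/
def Lambda (n : ℕ) (G : Type*) [CommGroup G] : Type _ := ⋀[ℚ]^n (QW G)

instance (n : ℕ) (G : Type*) [CommGroup G] : AddCommGroup (Lambda n G) :=
  inferInstanceAs (AddCommGroup (⋀[ℚ]^n (QW G)))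

instance (n : ℕ) (G : Type*) [CommGroup G] : Module ℚ (Lambda n G) :=
  inferInstanceAs (Module ℚ (⋀[ℚ]^n (QW G)))

/-- The underlying element of the ambient exterior algebra of `Λ^n(G)`. -/
def Lambda.amb {n : ℕ} {G : Type*} [CommGroup G] (x : Lambda n G) :
    ExteriorAlgebra ℚ (QW G) :=
  Subtype.val x

/-- Wedge `x₁ ∧ … ∧ x_n` of field elements, in the ambient exterior algebra of `Eˣ ⊗ ℚ`. -/
def fw {E : Type*} [Field E] {n : ℕ} (v : Fin n → E) : ExteriorAlgebra ℚ (QW Eˣ) :=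
  ExteriorAlgebra.ιMulti ℚ n fun i => toQF (v i)

/-- Wedge `x₁ ∧ … ∧ x_n` of field elements, as an element of `Λ^n(Eˣ)`. -/
def wedge {E : Type*} [Field E] {n : ℕ} (v : Fin n → E) : Lambda n Eˣ :=
  ⟨fw v, ExteriorAlgebra.ιMulti_range ℚ n (Set.mem_range_self _)⟩

/-- The map `ExteriorAlgebra(G ⊗ ℚ) → ExteriorAlgebra(G' ⊗ ℚ)` induced by a homomorphism
`f : G →* G'`; it restricts to the functorial map `Λ^n(G) → Λ^n(G')` in each degree. -/
def lamMap {G G' : Type*} [CommGroup G] [CommGroup G'] (f : G →* G') :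
    ExteriorAlgebra ℚ (QW G) →ₐ[ℚ] ExteriorAlgebra ℚ (QW G') :=
  ExteriorAlgebra.map (LinearMap.baseChange ℚ (MonoidHom.toAdditive f).toIntLinearMap)

/-! ## The group `B₂(E)` and the five-term relations. -/

/-- The cross-ratio of four points of `P¹(E) = E ∪ {∞}` (`∞ = none`), with value in `E`:
for pairwise distinct arguments at most one argument is `∞`, and the value is the usual
cross-ratio `((z₁−z₃)(z₂−z₄))/((z₁−z₄)(z₂−z₃))`, extended to `∞` in the usual way. -/
def crP {E : Type*} [Field E] : Option E → Option E → Option E → Option E → E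
  | some z₁, some z₂, some z₃, some z₄ => ((z₁ - z₃) * (z₂ - z₄)) / ((z₁ - z₄) * (z₂ - z₃))
  | none, some z₂, some z₃, some z₄ => (z₂ - z₄) / (z₂ - z₃)
  | some z₁, none, some z₃, some z₄ => (z₁ - z₃) / (z₁ - z₄)
  | some z₁, some z₂, none, some z₄ => (z₂ - z₄) / (z₁ - z₄)
  | some z₁, some z₂, some z₃, none => (z₁ - z₃) / (z₂ - z₃)
  | _, _, _, _ => 0

/-- The subspace of relations defining `B₂(E)`: spanned by `{0}₂`, `{1}₂`, `{∞}₂` and the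
five-term elements `Σᵢ (−1)ⁱ {cr(z₁,…,ẑᵢ,…,z₅)}₂` for pairwise distinct `z₁,…,z₅ ∈ P¹(E)`. -/
def fiveTermRel (E : Type*) [Field E] : Submodule ℚ (Option E →₀ ℚ) :=
  Submodule.span ℚ
    ({Finsupp.single (some 0) 1, Finsupp.single (some 1) 1, Finsupp.single none 1} ∪
      {x | ∃ z : Fin 5 → Option E, (∀ i j, i ≠ j → z i ≠ z j) ∧
        x = ∑ i : Fin 5, (-1 : ℚ) ^ (i : ℕ) •
          Finsupp.single (some (crP (z (i.succAbove 0)) (z (i.succAbove 1))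
            (z (i.succAbove 2)) (z (i.succAbove 3)))) 1})

/-- `B₂(E)`: the ℚ-vector space with basis `{x}₂`, `x ∈ P¹(E)`, modulo `{0}₂`, `{1}₂`,
`{∞}₂` and the five-term relations. -/
def B2 (E : Type*) [Field E] : Type _ := (Option E →₀ ℚ) ⧸ fiveTermRel E

instance (E : Type*) [Field E] : AddCommGroup (B2 E) :=
  inferInstanceAs (AddCommGroup ((Option E →₀ ℚ) ⧸ fiveTermRel E))

instance (E : Type*) [Field E] : Module ℚ (B2 E) :=
  inferInstanceAs (Module ℚ ((Option E →₀ ℚ) ⧸ fiveTermRel E))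

/-- The class `{x}₂ ∈ B₂(E)` of `x ∈ E`. -/
def B2sym {E : Type*} [Field E] (x : E) : B2 E :=
  Submodule.Quotient.mk (Finsupp.single (some x) 1)

/-! ## Discrete valuation fields, with a chosen realization `K` of the residue field. -/

/-- A discrete valuation `ν` on a field `F`, together with a realization of its residue
field as a field `K`: `v` is a surjective homomorphism `Fˣ → ℤ` satisfying the ultrametric
inequality, and `res : F → K` realizes `K` as the residue field `O_ν/m_ν` (by convention
`res` is normalized to vanish outside of `O_ν`, so that this data is rigid). -/
structure DVF (F K : Type*) [Field F] [Field K] where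
  v : Fˣ → ℤ
  v_mul : ∀ x y : Fˣ, v (x * y) = v x + v y
  v_surj : Function.Surjective v
  v_min : ∀ x y z : Fˣ, (z : F) = (x : F) + (y : F) → min (v x) (v y) ≤ v z
  res : F → K
  res_zero : res 0 = 0
  res_one : res 1 = 1
  res_add : ∀ x y : Fˣ, 0 ≤ v x → 0 ≤ v y → res ((x : F) + (y : F)) = res (x : F) + res (y : F)
  res_mul : ∀ x y : Fˣ, 0 ≤ v x → 0 ≤ v y → res ((x : F) * (y : F)) = res (x : F) * res (y : F)
  res_vanish : ∀ x : Fˣ, 0 < v x → res (x : F) = 0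
  res_unit : ∀ x : Fˣ, v x = 0 → res (x : F) ≠ 0
  res_junk : ∀ x : Fˣ, v x < 0 → res (x : F) = 0
  res_surj : ∀ c : K, c ≠ 0 → ∃ x : Fˣ, v x = 0 ∧ res (x : F) = c

/-- `D` is *the* tame symbol `∂_ν : Λ^{n+1}(Fˣ) → Λ^n(Kˣ)` of the discrete valuation `w`:
it is ℚ-linear and `∂_ν(x ∧ u₂ ∧ … ∧ u_{n+1}) = ν(x)·(ū₂ ∧ … ∧ ū_{n+1})` whenever
`u₂, …, u_{n+1}` are units (for `n = 0` this reads `∂_ν(x) = ν(x) ∈ ℚ = Λ^0(Kˣ)`). -/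
def IsTameSymbol {F K : Type*} [Field F] [Field K] (w : DVF F K) (n : ℕ)
    (D : Lambda (n+1) Fˣ →ₗ[ℚ] Lambda n Kˣ) : Prop :=
  ∀ (x : Fˣ) (u : Fin n → Fˣ), (∀ i, w.v (u i) = 0) →
    D (wedge (Fin.cons (x : F) (fun i => (u i : F)))) =
      (w.v x : ℚ) • wedge (fun i => w.res (u i : F))

/-- `DB` is *the* tame symbol `∂_ν^B : B₂(F)⊗Λ^{n+1}(Fˣ) → B₂(K)⊗Λ^n(Kˣ)` on the
polylogarithmic side, relative to the tame symbol `D = ∂_ν : Λ^{n+1}(Fˣ) → Λ^n(Kˣ)`: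
`∂_ν^B({a}₂⊗b) = 0` when `ν(a) ≠ 0`, and `∂_ν^B({u}₂⊗b) = −{ū}₂⊗∂_ν(b)` for `u` a unit. -/
def IsTameSymbolB {F K : Type*} [Field F] [Field K] (w : DVF F K) (n : ℕ)
    (D : Lambda (n+1) Fˣ →ₗ[ℚ] Lambda n Kˣ)
    (DB : (B2 F ⊗[ℚ] Lambda (n+1) Fˣ) →ₗ[ℚ] (B2 K ⊗[ℚ] Lambda n Kˣ)) : Prop :=
  (∀ a : Fˣ, (a : F) ≠ 1 → w.v a ≠ 0 → ∀ b : Lambda (n+1) Fˣ,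
      DB (B2sym (a : F) ⊗ₜ b) = 0) ∧
  (∀ u : Fˣ, w.v u = 0 → ∀ b : Lambda (n+1) Fˣ,
      DB (B2sym (u : F) ⊗ₜ b) = - (B2sym (w.res (u : F)) ⊗ₜ D b))

/-- `δ` is *the* differential `δ_{n+2} : B₂(E)⊗Λ^n(Eˣ) → Λ^{n+2}(Eˣ)` of the
polylogarithmic complex: `δ({x}₂ ⊗ w) = x ∧ (1−x) ∧ w` for `x ∈ E∖{0,1}`. -/
def IsDelta (E : Type*) [Field E] (n : ℕ)
    (δ : (B2 E ⊗[ℚ] Lambda n Eˣ) →ₗ[ℚ] Lambda (n+2) Eˣ) : Prop :=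
  ∀ x : E, x ≠ 0 → x ≠ 1 → ∀ b : Lambda n Eˣ,
    (δ (B2sym x ⊗ₜ b)).amb = fw ![x, 1 - x] * b.amb

/-- The subspace `D_m ⊆ B₂(K)⊗Λ^{m−2}(Kˣ)` (here `n = m−2`): the ℚ-span of the elements
`{x}₂ ⊗ (x ∧ w)` with `x ∈ K∖{0,1}` and `w ∈ Λ^{m−3}(Kˣ)`; it is `0` when `m = 2`. -/
def Dspan (K : Type*) [Field K] : (n : ℕ) → Submodule ℚ (B2 K ⊗[ℚ] Lambda n Kˣ)
  | 0 => ⊥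
  | (n+1) => Submodule.span ℚ
      {z | ∃ x : K, x ≠ 0 ∧ x ≠ 1 ∧ ∃ y : Lambda (n+1) Kˣ,
        (∃ w ∈ ⋀[ℚ]^n (QW Kˣ), y.amb = fw ![x] * w) ∧ z = B2sym x ⊗ₜ y}

/-- A discrete valuation (with residue field realized as `k`) on a field `L` over `K`,
trivial on `K` and inducing on `K ⊆ O_ν` the canonical copy of `K` inside `k`. -/
structure KDVF (K L k : Type*) [Field K] [Field L] [Field k] [Algebra K L] [Algebra K k]
    extends DVF L k where
  v_triv : ∀ (c : K) (u : Lˣ), (u : L) = algebraMap K L c → v u = 0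
  res_alg : ∀ c : K, res (algebraMap K L c) = algebraMap K k c

/-- `F` is a one-dimensional field over `K`: finitely generated of transcendence degree 1. -/
def IsOneDim (K F : Type*) [Field K] [Field F] [Algebra K F] : Prop :=
  (∃ s : Finset F, IntermediateField.adjoin K (s : Set F) = ⊤) ∧
  ∃ t : F, Transcendental K t ∧
    Algebra.IsAlgebraic (IntermediateField.adjoin K ({t} : Set F)) F

/-- `L` is a two-dimensional field over `K`: finitely generated of transcendence degree 2. -/
def IsTwoDim (K L : Type*) [Field K] [Field L] [Algebra K L] : Prop :=
  (∃ s : Finset L, IntermediateField.adjoin K (s : Set L) = ⊤) ∧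
  ∃ t : Fin 2 → L, AlgebraicIndependent K t ∧
    Algebra.IsAlgebraic (IntermediateField.adjoin K (Set.range t)) L

universe u

/-- The data of a divisorial valuation on a field `L` over `K`: a residue field `k` which is
one-dimensional over `K`, together with a discrete valuation of `L` over `K` with residue
field `k`. -/
structure DValData (K L : Type u) [Field K] [Field L] [Algebra K L] : Type (u+1) where
  k : Type u
  [fieldk : Field k]
  [algk : Algebra K k]
  w : KDVF K L k
  onedim : IsOneDim K k

attribute [instance] DValData.fieldk DValData.algk

/-- `vf : Lˣ → ℤ` is a divisorial valuation of `L` over `K` (an element of `dval(L)`):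
a discrete valuation trivial on `K` whose residue field is one-dimensional over `K`. -/
def IsDVal (K L : Type u) [Field K] [Field L] [Algebra K L] (vf : Lˣ → ℤ) : Prop :=
  ∃ d : DValData K L, d.w.v = vf

/-- The set `dval(L)` of divisorial valuations of `L` over `K`, as a type. -/
def DVal (K L : Type u) [Field K] [Field L] [Algebra K L] : Type u :=
  {vf : Lˣ → ℤ // IsDVal K L vf}

/-- `h` is a lifted reciprocity map (in weight `m = n+2 ≥ 2`) on the one-dimensional field
`F` over `K`.  The set `val(F)` of discrete valuations of `F` trivial on `K` (whose residue
fields are the finite extension `K` of `K`) is the type `KDVF K F K`; the maps `∂_ν`, `∂_ν^B`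
and `δ` are specified through their characteristic predicates, as they are unique. -/
def IsLiftedRec (K F : Type*) [Field K] [Field F] [Algebra K F] (n : ℕ)
    (h : Lambda (n+3) Fˣ →ₗ[ℚ] ((B2 K ⊗[ℚ] Lambda n Kˣ) ⧸ Dspan K n)) : Prop :=
  -- (i)  h(δ_{m+1}(α)) = Tot_F(α) mod D_m
  (∀ (δF : (B2 F ⊗[ℚ] Lambda (n+1) Fˣ) →ₗ[ℚ] Lambda (n+3) Fˣ), IsDelta F (n+1) δF →
    ∀ (D : (ν : KDVF K F K) → (Lambda (n+1) Fˣ →ₗ[ℚ] Lambda n Kˣ)),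
      (∀ ν, IsTameSymbol ν.toDVF n (D ν)) →
    ∀ (DB : (ν : KDVF K F K) →
        ((B2 F ⊗[ℚ] Lambda (n+1) Fˣ) →ₗ[ℚ] (B2 K ⊗[ℚ] Lambda n Kˣ))),
      (∀ ν, IsTameSymbolB ν.toDVF n (D ν) (DB ν)) →
    ∀ α : B2 F ⊗[ℚ] Lambda (n+1) Fˣ,
      h (δF α) = Submodule.Quotient.mk (∑ᶠ ν : KDVF K F K, DB ν α)) ∧
  -- (ii)  δ_m(h(b)) = −Tot_F(b)
  (∀ (δK : (B2 K ⊗[ℚ] Lambda n Kˣ) →ₗ[ℚ] Lambda (n+2) Kˣ), IsDelta K n δK →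
    ∀ (D : (ν : KDVF K F K) → (Lambda (n+3) Fˣ →ₗ[ℚ] Lambda (n+2) Kˣ)),
      (∀ ν, IsTameSymbol ν.toDVF (n+2) (D ν)) →
    ∀ b : Lambda (n+3) Fˣ, ∀ y : B2 K ⊗[ℚ] Lambda n Kˣ,
      Submodule.Quotient.mk y = h b → δK y = - ∑ᶠ ν : KDVF K F K, D ν b) ∧
  -- (iii)  h(f₁ ∧ f₂ ∧ c₃ ∧ … ∧ c_{m+1}) = 0
  (∀ (f₁ f₂ : Fˣ) (c : Fin (n+1) → Kˣ),
    h (wedge (Fin.cons (f₁ : F) (Fin.cons (f₂ : F)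
      (fun i => algebraMap K F (c i : K))))) = 0)

end

/-! ### Relations in `B₂(E)` -/

section B2Relations

variable {E : Type*} [Field E]

lemma b2sym_zero : B2sym (0 : E) = 0 :=
  (Submodule.Quotient.mk_eq_zero _).2 (Submodule.subset_span (Or.inl (by simp)))

lemma b2sym_one : B2sym (1 : E) = 0 :=
  (Submodule.Quotient.mk_eq_zero _).2 (Submodule.subset_span (Or.inl (by simp)))

lemma b2_span : Submodule.span ℚ (Set.range (B2sym : E → B2 E)) = ⊤ := by
  rw [eq_top_iff]
  rintro x -
  obtain ⟨f, rfl⟩ := Submodule.Quotient.mk_surjective (fiveTermRel E) x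
  induction f using Finsupp.induction_linear with
  | zero => exact Submodule.zero_mem _
  | add f g hf hg => exact Submodule.add_mem _ hf hg
  | single o c =>
    have h : (Submodule.Quotient.mk (Finsupp.single o c) : B2 E)
        = c • (Submodule.Quotient.mk (Finsupp.single o 1) : B2 E) := by
      have : (Finsupp.single o c : Option E →₀ ℚ) = c • Finsupp.single o 1 := by simp
      rw [this]; rfl
    refine (congrArg (· ∈ Submodule.span ℚ (Set.range (B2sym : E → B2 E))) h).mpr ?_
    refine Submodule.smul_mem _ _ ?_
    cases o with
    | none =>
      have h0 : (Submodule.Quotient.mk (Finsupp.single none 1) : B2 E) = 0 :=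
        (Submodule.Quotient.mk_eq_zero _).2 (Submodule.subset_span (Or.inl (by simp)))
      rw [h0]; exact Submodule.zero_mem _
    | some a => exact Submodule.subset_span ⟨a, rfl⟩

/-- The five-term combination attached to the configuration `(∞, 0, 1, a, b)`. -/
def ft {A : Type*} [AddCommGroup A] (f : E → A) (a b : E) : A :=
  f (a * (1 - b) / (b * (1 - a))) - f ((1 - b) / (1 - a)) + f (b / a) - f b + f a

lemma fin_succAbove_vals :
    ((0 : Fin 5).succAbove (0 : Fin 4) = 1 ∧ (0 : Fin 5).succAbove (1 : Fin 4) = 2 ∧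
      (0 : Fin 5).succAbove (2 : Fin 4) = 3 ∧ (0 : Fin 5).succAbove (3 : Fin 4) = 4) ∧
    ((1 : Fin 5).succAbove (0 : Fin 4) = 0 ∧ (1 : Fin 5).succAbove (1 : Fin 4) = 2 ∧
      (1 : Fin 5).succAbove (2 : Fin 4) = 3 ∧ (1 : Fin 5).succAbove (3 : Fin 4) = 4) ∧
    ((2 : Fin 5).succAbove (0 : Fin 4) = 0 ∧ (2 : Fin 5).succAbove (1 : Fin 4) = 1 ∧
      (2 : Fin 5).succAbove (2 : Fin 4) = 3 ∧ (2 : Fin 5).succAbove (3 : Fin 4) = 4) ∧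
    ((3 : Fin 5).succAbove (0 : Fin 4) = 0 ∧ (3 : Fin 5).succAbove (1 : Fin 4) = 1 ∧
      (3 : Fin 5).succAbove (2 : Fin 4) = 2 ∧ (3 : Fin 5).succAbove (3 : Fin 4) = 4) ∧
    ((4 : Fin 5).succAbove (0 : Fin 4) = 0 ∧ (4 : Fin 5).succAbove (1 : Fin 4) = 1 ∧
      (4 : Fin 5).succAbove (2 : Fin 4) = 2 ∧ (4 : Fin 5).succAbove (3 : Fin 4) = 3) := by
  decide

lemma map_ft {A B : Type*} [AddCommGroup A] [AddCommGroup B] [Module ℚ A] [Module ℚ B]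
    (L : A →ₗ[ℚ] B) (f : E → A) (a b : E) : L (ft f a b) = ft (fun x => L (f x)) a b := by
  simp only [ft, map_add, map_sub]

/-- The five-term element of `z`, as it appears in `fiveTermRel`. -/
noncomputable def fiveTerm (z : Fin 5 → Option E) : Option E →₀ ℚ :=
  ∑ i : Fin 5, (-1 : ℚ) ^ (i : ℕ) •
    Finsupp.single (some (crP (z (i.succAbove 0)) (z (i.succAbove 1))
      (z (i.succAbove 2)) (z (i.succAbove 3)))) 1

lemma fiveTerm_eq (z : Fin 5 → Option E) :
    fiveTerm z = Finsupp.single (some (crP (z 1) (z 2) (z 3) (z 4))) 1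
      - Finsupp.single (some (crP (z 0) (z 2) (z 3) (z 4))) 1
      + Finsupp.single (some (crP (z 0) (z 1) (z 3) (z 4))) 1
      - Finsupp.single (some (crP (z 0) (z 1) (z 2) (z 4))) 1
      + Finsupp.single (some (crP (z 0) (z 1) (z 2) (z 3))) 1 := by
  obtain ⟨⟨a1, a2, a3, a4⟩, ⟨b1, b2, b3, b4⟩, ⟨c1, c2, c3, c4⟩, ⟨d1, d2, d3, d4⟩,
    ⟨e1, e2, e3, e4⟩⟩ := fin_succAbove_vals
  rw [fiveTerm, Fin.sum_univ_five, a1, a2, a3, a4, b1, b2, b3, b4, c1, c2, c3, c4,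
    d1, d2, d3, d4, e1, e2, e3, e4]
  have p0 : (-1 : ℚ) ^ ((0 : Fin 5) : ℕ) = 1 := by norm_num
  have p1 : (-1 : ℚ) ^ ((1 : Fin 5) : ℕ) = -1 := by norm_num
  have p2 : (-1 : ℚ) ^ ((2 : Fin 5) : ℕ) = 1 := by norm_num
  have p3 : (-1 : ℚ) ^ ((3 : Fin 5) : ℕ) = -1 := by
    rw [show ((3 : Fin 5) : ℕ) = 3 from rfl]; norm_num
  have p4 : (-1 : ℚ) ^ ((4 : Fin 5) : ℕ) = 1 := by
    rw [show ((4 : Fin 5) : ℕ) = 4 from rfl]; norm_num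
  rw [p0, p1, p2, p3, p4]
  module

/-- The determinant `x y' - x' y` of the homogeneous coordinates of two points `[x : y]` and
`[x' : y']` of `P¹(E)`, normalized by `c = [c : 1]` and `∞ = [1 : 0]`. -/
def pdet : Option E → Option E → E
  | some x, some y => x - y
  | none, some _ => 1
  | some _, none => -1
  | none, none => 0

lemma pdet_ne_zero {x y : Option E} (h : x ≠ y) : pdet x y ≠ 0 := by
  rcases x with _ | x <;> rcases y with _ | y <;> simp_all [pdet, sub_eq_zero]

lemma pdet_pluecker (x y z t : Option E) :
    pdet x y * pdet z t - pdet x z * pdet y t + pdet x t * pdet y z = 0 := by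
  rcases x with _ | x <;> rcases y with _ | y <;> rcases z with _ | z <;> rcases t with _ | t <;>
    simp only [pdet] <;> ring

lemma crP_eq_pdet {x y z t : Option E} (hxy : x ≠ y) (hxz : x ≠ z) (hxt : x ≠ t) (hyz : y ≠ z)
    (hyt : y ≠ t) (hzt : z ≠ t) :
    crP x y z t = (pdet x z * pdet y t) / (pdet x t * pdet y z) := by
  rcases x with _ | x <;> rcases y with _ | y <;> rcases z with _ | z <;> rcases t with _ | t <;>
    simp_all [pdet, crP]
  · rw [← neg_sub y t, ← neg_sub x t, neg_div_neg_eq]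
  · rw [← neg_sub x z, ← neg_sub y z, neg_div_neg_eq]

/-- Moving `(z₀, z₁, z₂)` to `(∞, 0, 1)`: the five cross-ratios of five distinct points depend
only on `a = cr(z₀, z₁, z₂, z₃)` and `b = cr(z₀, z₁, z₂, z₄)`. -/
lemma fiveTerm_normalize (z : Fin 5 → Option E) (hz : ∀ i j, i ≠ j → z i ≠ z j) :
    ∃ a b : E, a ≠ 0 ∧ a ≠ 1 ∧ b ≠ 0 ∧ b ≠ 1 ∧ a ≠ b ∧
      fiveTerm z = ft (fun x => Finsupp.single (some x) 1) a b := by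
  have h01 := hz 0 1 (by decide)
  have h02 := hz 0 2 (by decide)
  have h03 := hz 0 3 (by decide)
  have h04 := hz 0 4 (by decide)
  have h12 := hz 1 2 (by decide)
  have h13 := hz 1 3 (by decide)
  have h14 := hz 1 4 (by decide)
  have h23 := hz 2 3 (by decide)
  have h24 := hz 2 4 (by decide)
  have h34 := hz 3 4 (by decide)
  rw [fiveTerm_eq, crP_eq_pdet h12 h13 h14 h23 h24 h34, crP_eq_pdet h02 h03 h04 h23 h24 h34,
    crP_eq_pdet h01 h03 h04 h13 h14 h34, crP_eq_pdet h01 h02 h04 h12 h14 h24,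
    crP_eq_pdet h01 h02 h03 h12 h13 h23]
  have p3 := pdet_pluecker (z 0) (z 1) (z 2) (z 3)
  have p4 := pdet_pluecker (z 0) (z 1) (z 2) (z 4)
  have p34 := pdet_pluecker (z 0) (z 1) (z 3) (z 4)
  replace h01 := pdet_ne_zero h01
  replace h02 := pdet_ne_zero h02
  replace h03 := pdet_ne_zero h03
  replace h04 := pdet_ne_zero h04
  replace h12 := pdet_ne_zero h12
  replace h13 := pdet_ne_zero h13
  replace h14 := pdet_ne_zero h14
  replace h23 := pdet_ne_zero h23
  replace h24 := pdet_ne_zero h24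
  replace h34 := pdet_ne_zero h34
  generalize pdet (z 0) (z 1) = d01 at *
  generalize pdet (z 0) (z 2) = d02 at *
  generalize pdet (z 0) (z 3) = d03 at *
  generalize pdet (z 0) (z 4) = d04 at *
  generalize pdet (z 1) (z 2) = d12 at *
  generalize pdet (z 1) (z 3) = d13 at *
  generalize pdet (z 1) (z 4) = d14 at *
  generalize pdet (z 2) (z 3) = d23 at *
  generalize pdet (z 2) (z 4) = d24 at *
  generalize pdet (z 3) (z 4) = d34 at *
  have ea : 1 - d02 * d13 / (d03 * d12) = -(d01 * d23) / (d03 * d12) := by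
    field_simp
    linear_combination p3
  have eb : 1 - d02 * d14 / (d04 * d12) = -(d01 * d24) / (d04 * d12) := by
    field_simp
    linear_combination p4
  have eab : d02 * d13 / (d03 * d12) - d02 * d14 / (d04 * d12)
      = -(d02 * d01 * d34) / (d12 * d03 * d04) := by
    field_simp
    linear_combination p34
  refine ⟨d02 * d13 / (d03 * d12), d02 * d14 / (d04 * d12), by positivity, fun h => ?_,
    by positivity, fun h => ?_, fun h => ?_, ?_⟩
  · rw [h, sub_self] at ea
    exact div_ne_zero (neg_ne_zero.2 (mul_ne_zero h01 h23)) (mul_ne_zero h03 h12) ea.symm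
  · rw [h, sub_self] at eb
    exact div_ne_zero (neg_ne_zero.2 (mul_ne_zero h01 h24)) (mul_ne_zero h04 h12) eb.symm
  · rw [h, sub_self] at eab
    exact div_ne_zero (neg_ne_zero.2 (mul_ne_zero (mul_ne_zero h02 h01) h34))
      (mul_ne_zero (mul_ne_zero h12 h03) h04) eab.symm
  · have t1 : d02 * d13 / (d03 * d12) * (-(d01 * d24) / (d04 * d12)) /
        (d02 * d14 / (d04 * d12) * (-(d01 * d23) / (d03 * d12))) = d13 * d24 / (d14 * d23) := by
      field_simp
    have t2 : -(d01 * d24) / (d04 * d12) / (-(d01 * d23) / (d03 * d12))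
        = d03 * d24 / (d04 * d23) := by
      field_simp
    have t3 : d02 * d14 / (d04 * d12) / (d02 * d13 / (d03 * d12)) = d03 * d14 / (d04 * d13) := by
      field_simp
    rw [ft, ea, eb, t1, t2, t3]

lemma ft_b2sym (a b : E) (ha0 : a ≠ 0) (ha1 : a ≠ 1) (hb0 : b ≠ 0) (hb1 : b ≠ 1) (hab : a ≠ b) :
    ft B2sym a b = 0 := by
  have hd : ∀ i j, i ≠ j → (![none, some 0, some 1, some a, some b] : Fin 5 → Option E) i ≠
      (![none, some 0, some 1, some a, some b] : Fin 5 → Option E) j := by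
    intro i j hij
    fin_cases i <;> fin_cases j <;>
      simp_all [eq_comm]
  have key : fiveTerm ![none, some 0, some 1, some a, some b] ∈ fiveTermRel E :=
    Submodule.subset_span (Or.inr ⟨_, hd, rfl⟩)
  have e : fiveTerm ![none, some 0, some 1, some a, some b]
      = ft (fun x => Finsupp.single (some x) 1) a b := by
    have e1 : (0 - a) * (1 - b) / ((0 - b) * (1 - a)) = a * (1 - b) / (b * (1 - a)) := by
      rw [zero_sub, zero_sub, neg_mul, neg_mul, neg_div_neg_eq]
    have e2 : (0 - b) / (0 - a) = b / a := by rw [zero_sub, zero_sub, neg_div_neg_eq]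
    have e3 : ∀ c : E, (0 - c) / (0 - 1) = c := by intro c; simp
    have h : fiveTerm ![none, some 0, some 1, some a, some b]
        = Finsupp.single (some ((0 - a) * (1 - b) / ((0 - b) * (1 - a)))) 1
          - Finsupp.single (some ((1 - b) / (1 - a))) 1
          + Finsupp.single (some ((0 - b) / (0 - a))) 1
          - Finsupp.single (some ((0 - b) / (0 - 1))) 1
          + Finsupp.single (some ((0 - a) / (0 - 1))) 1 := fiveTerm_eq _
    rw [h, e1, e2, e3, e3]
    rfl
  rw [e] at key
  have h : (fiveTermRel E).mkQ (ft (fun x => Finsupp.single (some x) 1) a b) = 0 :=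
    (Submodule.Quotient.mk_eq_zero _).2 key
  rw [map_ft] at h
  exact h

variable [CharZero E]

lemma b2sym_inv (x : E) : B2sym x⁻¹ = - B2sym x := by
  by_cases hx0 : x = 0
  · subst hx0; simp [b2sym_zero]
  by_cases hx1 : x = 1
  · subst hx1; simp [b2sym_one]
  -- `g(u) - g(v) + g(uv) = 0` for `g(u) = {u}₂ + {u⁻¹}₂`, by adding the five-term relations
  -- for `(a, b)` and `(b, a)` with `u = a / b` and `v = (1 - b) / (1 - a)`
  have hg : ∀ u v : E, u ≠ 0 → u ≠ 1 → v ≠ 0 → v ≠ 1 → u * v ≠ 1 →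
      (B2sym u + B2sym u⁻¹) - (B2sym v + B2sym v⁻¹)
        + (B2sym (u * v) + B2sym (u * v)⁻¹) = 0 := by
    intro u v hu0 hu1 hv0 hv1 huv
    have hd : u * v - 1 ≠ 0 := sub_ne_zero.2 huv
    have hv1' : v - 1 ≠ 0 := sub_ne_zero.2 hv1
    have hu1' : u - 1 ≠ 0 := sub_ne_zero.2 hu1
    obtain ⟨b, hb⟩ : ∃ b, b = (v - 1) / (u * v - 1) := ⟨_, rfl⟩
    obtain ⟨a, ha⟩ : ∃ a, a = u * b := ⟨_, rfl⟩
    have hb0 : b ≠ 0 := by rw [hb]; exact div_ne_zero hv1' hd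
    have ha0 : a ≠ 0 := by rw [ha]; exact mul_ne_zero hu0 hb0
    have h1b : 1 - b = v * (u - 1) / (u * v - 1) := by
      rw [hb, eq_div_iff hd, sub_mul, div_mul_cancel₀ _ hd]; ring
    have h1a : 1 - a = (u - 1) / (u * v - 1) := by
      rw [ha, hb, eq_div_iff hd, sub_mul, mul_assoc, div_mul_cancel₀ _ hd]; ring
    have h1b0 : 1 - b ≠ 0 := by
      rw [h1b]; exact div_ne_zero (mul_ne_zero hv0 hu1') hd
    have h1a0 : 1 - a ≠ 0 := by rw [h1a]; exact div_ne_zero hu1' hd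
    have hab : a ≠ b := by
      intro h; rw [ha] at h
      exact hu1 (mul_right_cancel₀ hb0 (by rw [h, one_mul]))
    have hu : u = a / b := by rw [ha]; field_simp
    have hv : v = (1 - b) / (1 - a) := by
      rw [h1a, h1b, div_div_div_cancel_right₀ hd, mul_div_cancel_right₀ _ hu1']
    have r1 := ft_b2sym a b ha0 (fun h => h1a0 (by rw [h, sub_self])) hb0
      (fun h => h1b0 (by rw [h, sub_self])) hab
    have r2 := ft_b2sym b a hb0 (fun h => h1b0 (by rw [h, sub_self])) ha0
      (fun h => h1a0 (by rw [h, sub_self])) hab.symm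
    have t1 : a * (1 - b) / (b * (1 - a)) = u * v := by rw [hu, hv]; field_simp
    have t2 : b * (1 - a) / (a * (1 - b)) = (u * v)⁻¹ := by rw [← t1, inv_div]
    have t3 : (1 - a) / (1 - b) = v⁻¹ := by rw [hv, inv_div]
    have t4 : b / a = u⁻¹ := by rw [hu, inv_div]
    simp only [ft] at r1 r2
    rw [t1, ← hv, t4] at r1
    rw [t2, t3, ← hu] at r2
    rw [← add_zero (0 : B2 E)]
    nth_rewrite 1 [← r1]
    rw [← r2]
    abel
  have hg2 : ∀ u v : E, u ≠ 0 → u ≠ 1 → v ≠ 0 → v ≠ 1 → u * v ≠ 1 →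
      B2sym (u * v) + B2sym (u * v)⁻¹ = 0 := by
    intro u v hu0 hu1 hv0 hv1 huv
    have r1 := hg u v hu0 hu1 hv0 hv1 huv
    have r2 := hg v u hv0 hv1 hu0 hu1 (by rwa [mul_comm])
    rw [mul_comm v u] at r2
    have h2 : (2 : ℚ) • (B2sym (u * v) + B2sym (u * v)⁻¹) = 0 := by
      rw [two_smul, ← add_zero (0 : B2 E)]
      nth_rewrite 1 [← r1]
      rw [← r2]
      abel
    exact (smul_eq_zero.1 h2).resolve_left two_ne_zero
  obtain ⟨u, hu0, hu1, hux⟩ : ∃ u : E, u ≠ 0 ∧ u ≠ 1 ∧ u ≠ x := by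
    by_cases h : x = 2
    · refine ⟨3, by norm_num, by norm_num, ?_⟩
      rw [h]; norm_num
    · exact ⟨2, by norm_num, by norm_num, fun h' => h h'.symm⟩
  have hxu : u * (x / u) = x := by field_simp
  have := hg2 u (x / u) hu0 hu1 (div_ne_zero hx0 hu0)
    (fun h => hux (by rw [h, mul_one] at hxu; exact hxu)) (by rwa [hxu])
  rw [hxu] at this
  exact eq_neg_of_add_eq_zero_right this

lemma b2sym_one_sub (x : E) : B2sym (1 - x) = - B2sym x := by
  by_cases hx0 : x = 0
  · subst hx0; simp [b2sym_zero, b2sym_one]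
  by_cases hx1 : x = 1
  · subst hx1; simp [b2sym_zero, b2sym_one]
  -- `{a}₂ + {1 - a}₂` does not depend on `a`, by adding the five-term relations
  -- for `(a, b)` and `(1 - a, 1 - b)`
  have hh : ∀ a b : E, a ≠ 0 → a ≠ 1 → b ≠ 0 → b ≠ 1 →
      B2sym a + B2sym (1 - a) = B2sym b + B2sym (1 - b) := by
    intro a b ha0 ha1 hb0 hb1
    by_cases hab : a = b
    · rw [hab]
    have h1a : 1 - a ≠ 0 := sub_ne_zero.2 (Ne.symm ha1)
    have h1b : 1 - b ≠ 0 := sub_ne_zero.2 (Ne.symm hb1)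
    have r1 := ft_b2sym a b ha0 ha1 hb0 hb1 hab
    have r2 := ft_b2sym (1 - a) (1 - b) h1a (by simpa using ha0) h1b (by simpa using hb0)
      (by simpa using hab)
    simp only [ft, sub_sub_cancel] at r1 r2
    have t1 : (1 - a) * b / ((1 - b) * a) = (a * (1 - b) / (b * (1 - a)))⁻¹ := by
      rw [inv_div]; congr 1 <;> ring
    rw [t1, b2sym_inv] at r2
    rw [← sub_eq_zero, ← add_zero (0 : B2 E)]
    nth_rewrite 1 [← r1]
    rw [← r2, ← inv_div a b, b2sym_inv]
    abel
  have hx1' : 1 - x ≠ 0 := sub_ne_zero.2 (Ne.symm hx1)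
  -- following `x ↦ 1 - x ↦ (1 - x)⁻¹ ↦ …` around its orbit gives three times the constant
  have c1 := hh (1 - x)⁻¹ x (inv_ne_zero hx1') (by simpa using hx0) hx0 hx1
  have c2 := hh (1 - x⁻¹) x (by rw [sub_ne_zero, ne_comm]; simpa using hx1)
    (by simpa using hx0) hx0 hx1
  have e1 : 1 - (1 - x)⁻¹ = (1 - x⁻¹)⁻¹ := by
    have : x - 1 ≠ 0 := sub_ne_zero.2 hx1
    have h3 : 1 - x⁻¹ = (x - 1) / x := by field_simp
    rw [h3, inv_div, ← neg_sub x 1, inv_neg]; field_simp; ring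
  rw [e1, b2sym_inv, b2sym_inv] at c1
  rw [sub_sub_cancel, b2sym_inv] at c2
  have h3 : (3 : ℚ) • (B2sym x + B2sym (1 - x)) = 0 := by
    have : (3 : ℚ) = 1 + 1 + 1 := by norm_num
    rw [this, add_smul, add_smul, one_smul]
    nth_rewrite 1 [← c1]
    nth_rewrite 1 [← c2]
    abel
  exact eq_neg_of_add_eq_zero_right ((smul_eq_zero.1 h3).resolve_left three_ne_zero)

end B2Relations

/-! ### Residues and the specialization map on `B₂` -/

section Residue

namespace DVF

variable {F K : Type*} [Field F] [Field K] (w : DVF F K)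

open Classical in
/-- The valuation on `F`, with the junk value `0` at `0`. -/
noncomputable def val (x : F) : ℤ := if h : x = 0 then 0 else w.v (Units.mk0 x h)

lemma val_unit (x : Fˣ) : w.val (x : F) = w.v x := by
  rw [val, dif_neg x.ne_zero, Units.mk0_val]

lemma val_mul {x y : F} (hx : x ≠ 0) (hy : y ≠ 0) : w.val (x * y) = w.val x + w.val y := by
  lift x to Fˣ using hx.isUnit
  lift y to Fˣ using hy.isUnit
  rw [← Units.val_mul, val_unit, val_unit, val_unit, w.v_mul]

lemma val_one : w.val 1 = 0 := by
  have := w.val_mul (one_ne_zero (α := F)) one_ne_zero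
  rw [mul_one] at this
  omega

lemma val_inv (x : F) : w.val x⁻¹ = - w.val x := by
  by_cases hx : x = 0
  · simp [hx, val]
  have := w.val_mul hx (inv_ne_zero hx)
  rw [mul_inv_cancel₀ hx, val_one] at this
  omega

lemma val_div {x y : F} (hx : x ≠ 0) (hy : y ≠ 0) : w.val (x / y) = w.val x - w.val y := by
  rw [div_eq_mul_inv, w.val_mul hx (inv_ne_zero hy), val_inv, sub_eq_add_neg]

lemma val_neg (x : F) : w.val (-x) = w.val x := by
  by_cases hx : x = 0
  · simp [hx]
  have h1 := w.val_mul (neg_ne_zero.2 (one_ne_zero (α := F))) (neg_ne_zero.2 one_ne_zero)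
  rw [neg_mul_neg, mul_one, val_one] at h1
  rw [neg_eq_neg_one_mul, w.val_mul (neg_ne_zero.2 one_ne_zero) hx]
  omega

lemma res_mul' {x y : F} (hx : x ≠ 0) (hy : y ≠ 0) (hvx : 0 ≤ w.val x) (hvy : 0 ≤ w.val y) :
    w.res (x * y) = w.res x * w.res y := by
  lift x to Fˣ using hx.isUnit
  lift y to Fˣ using hy.isUnit
  rw [val_unit] at hvx hvy
  exact w.res_mul x y hvx hvy

lemma res_add' {x y : F} (hx : x ≠ 0) (hy : y ≠ 0) (hvx : 0 ≤ w.val x) (hvy : 0 ≤ w.val y) :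
    w.res (x + y) = w.res x + w.res y := by
  lift x to Fˣ using hx.isUnit
  lift y to Fˣ using hy.isUnit
  rw [val_unit] at hvx hvy
  exact w.res_add x y hvx hvy

lemma res_of_val_ne {x : F} (hv : w.val x ≠ 0) : w.res x = 0 := by
  by_cases hx : x = 0
  · simp [hx, w.res_zero]
  lift x to Fˣ using (Ne.isUnit hx)
  rw [val_unit] at hv
  rcases lt_or_gt_of_ne hv with h | h
  · exact w.res_junk x h
  · exact w.res_vanish x h

lemma res_ne_zero {x : F} (hx : x ≠ 0) (hv : w.val x = 0) : w.res x ≠ 0 := by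
  lift x to Fˣ using hx.isUnit
  rw [val_unit] at hv
  exact w.res_unit x hv

lemma val_eq_zero_of_res {x : F} (h : w.res x ≠ 0) : w.val x = 0 := by
  by_contra hv
  exact h (w.res_of_val_ne hv)

lemma res_inv (x : F) : w.res x⁻¹ = (w.res x)⁻¹ := by
  by_cases hx : x = 0
  · simp [hx, w.res_zero]
  by_cases hv : w.val x = 0
  · refine eq_inv_of_mul_eq_one_left ?_
    rw [← w.res_mul' (inv_ne_zero hx) hx (by rw [val_inv]; omega) (by omega),
      inv_mul_cancel₀ hx, w.res_one]
  · rw [w.res_of_val_ne hv, w.res_of_val_ne (by rw [val_inv]; omega), inv_zero]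

lemma res_div {x y : F} (hx : x ≠ 0) (hy : y ≠ 0) (hvx : 0 ≤ w.val x) (hvy : w.val y = 0) :
    w.res (x / y) = w.res x / w.res y := by
  rw [div_eq_mul_inv, w.res_mul' hx (inv_ne_zero hy) hvx (by rw [val_inv]; omega), res_inv,
    div_eq_mul_inv]

lemma res_neg_one : w.res (-1) = -1 := by
  have h := w.res_add' (one_ne_zero (α := F)) (neg_ne_zero.2 one_ne_zero) (by rw [val_one])
    (by rw [val_neg, val_one])
  rw [add_neg_cancel, w.res_zero, w.res_one] at h
  exact (neg_eq_of_add_eq_zero_right h.symm).symm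

lemma res_one_sub {x : F} (hx : x ≠ 0) (hv : 0 ≤ w.val x) : w.res (1 - x) = 1 - w.res x := by
  have h0 : (-1 : F) ≠ 0 := neg_ne_zero.2 one_ne_zero
  rw [sub_eq_add_neg, neg_eq_neg_one_mul, w.res_add' one_ne_zero (mul_ne_zero h0 hx)
    (by rw [val_one]) (by rw [← neg_eq_neg_one_mul, val_neg]; exact hv), w.res_one,
    w.res_mul' h0 hx (by rw [val_neg, val_one]) hv, res_neg_one]
  ring

lemma val_one_sub_of_pos {x : F} (hv : 0 < w.val x) : w.val (1 - x) = 0 := by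
  have hx : x ≠ 0 := by rintro rfl; simp [val] at hv
  refine w.val_eq_zero_of_res ?_
  rw [w.res_one_sub hx hv.le, w.res_of_val_ne hv.ne']
  simp

lemma val_one_sub_of_neg {x : F} (hv : w.val x < 0) : w.val (1 - x) = w.val x := by
  have hx : x ≠ 0 := by rintro rfl; simp [val] at hv
  have h1 : w.val (1 - x⁻¹) = 0 := w.val_one_sub_of_pos (by rw [val_inv]; omega)
  have h2 : 1 - x⁻¹ ≠ 0 := by
    rw [sub_ne_zero]
    intro h
    have h3 := w.val_inv x
    rw [← h, val_one] at h3
    omega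
  have h3 : 1 - x = -(x * (1 - x⁻¹)) := by field_simp; ring
  rw [h3, val_neg, w.val_mul hx h2, h1, add_zero]

lemma val_one_sub_nonneg {x : F} (hv : 0 ≤ w.val x) : 0 ≤ w.val (1 - x) := by
  by_contra h
  have := w.val_one_sub_of_neg (not_le.1 h)
  rw [sub_sub_cancel] at this
  omega

lemma spec_of_val_ne {x : F} (hv : w.val x ≠ 0) : B2sym (w.res x) = 0 := by
  rw [w.res_of_val_ne hv, b2sym_zero]

section Specialization

variable [CharZero K]

lemma spec_inv (x : F) : B2sym (w.res x⁻¹) = - B2sym (w.res x) := by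
  rw [res_inv, b2sym_inv]

lemma spec_one_sub (x : F) : B2sym (w.res (1 - x)) = - B2sym (w.res x) := by
  by_cases hx : x = 0
  · simp [hx, w.res_zero, w.res_one, b2sym_zero, b2sym_one]
  by_cases hv : 0 ≤ w.val x
  · rw [w.res_one_sub hx hv, b2sym_one_sub]
  · rw [w.res_of_val_ne (x := x) (by omega),
      w.res_of_val_ne (x := 1 - x) (by rw [w.val_one_sub_of_neg (by omega)]; omega), b2sym_zero,
      neg_zero]

/-- Exchanging the last two points of `(∞, 0, 1, a, b)` changes the sign. -/
lemma ft_swap (a b : F) :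
    ft (fun x => B2sym (w.res x)) b a = - ft (fun x => B2sym (w.res x)) a b := by
  simp only [ft]
  rw [← inv_div (a * (1 - b)), ← inv_div (1 - b) (1 - a), ← inv_div b a]
  simp only [spec_inv]
  abel

/-- Exchanging the points `0` and `1` by `x ↦ 1 - x` changes the sign. -/
lemma ft_one_sub (a b : F) :
    ft (fun x => B2sym (w.res x)) (1 - a) (1 - b) = - ft (fun x => B2sym (w.res x)) a b := by
  simp only [ft, sub_sub_cancel]
  have t1 : (1 - a) * b / ((1 - b) * a) = (a * (1 - b) / (b * (1 - a)))⁻¹ := by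
    rw [inv_div]; congr 1 <;> ring
  rw [t1]
  simp only [spec_inv, spec_one_sub]
  abel

/-- Exchanging the points `0` and `∞` by `x ↦ x⁻¹` changes the sign. -/
lemma ft_inv {a b : F} (ha0 : a ≠ 0) (ha1 : a ≠ 1) (hb0 : b ≠ 0) (hb1 : b ≠ 1) :
    ft (fun x => B2sym (w.res x)) a⁻¹ b⁻¹ = - ft (fun x => B2sym (w.res x)) a b := by
  have h1a : 1 - a ≠ 0 := sub_ne_zero.2 ha1.symm
  have h1b : 1 - b ≠ 0 := sub_ne_zero.2 hb1.symm
  have ea : 1 - a⁻¹ = -((1 - a) / a) := by field_simp; ring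
  have eb : 1 - b⁻¹ = -((1 - b) / b) := by field_simp; ring
  have t1 : a⁻¹ * (1 - b⁻¹) / (b⁻¹ * (1 - a⁻¹)) = (1 - b) / (1 - a) := by
    rw [ea, eb]; field_simp
  have t2 : (1 - b⁻¹) / (1 - a⁻¹) = a * (1 - b) / (b * (1 - a)) := by
    rw [ea, eb]; field_simp
  have t3 : b⁻¹ / a⁻¹ = (b / a)⁻¹ := by field_simp
  simp only [ft, t1, t2, t3, spec_inv]
  abel

/-- The case where `a` specializes to `0`: the terms vanish or cancel in pairs. -/
lemma ft_spec_of_pos {a b : F} (ha0 : a ≠ 0) (ha1 : a ≠ 1) (hb0 : b ≠ 0) (hb1 : b ≠ 1)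
    (ha : 0 < w.val a) : ft (fun x => B2sym (w.res x)) a b = 0 := by
  have h1a : 1 - a ≠ 0 := sub_ne_zero.2 ha1.symm
  have h1b : 1 - b ≠ 0 := sub_ne_zero.2 hb1.symm
  have va := w.val_one_sub_of_pos ha
  have ra : w.res (1 - a) = 1 := by
    rw [w.res_one_sub ha0 ha.le, w.res_of_val_ne ha.ne', sub_zero]
  have v1 : w.val (a * (1 - b) / (b * (1 - a)))
      = w.val a + w.val (1 - b) - (w.val b + w.val (1 - a)) := by
    rw [w.val_div (mul_ne_zero ha0 h1b) (mul_ne_zero hb0 h1a), w.val_mul ha0 h1b,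
      w.val_mul hb0 h1a]
  have v2 := w.val_div h1b h1a
  have v3 := w.val_div hb0 ha0
  have sa : B2sym (w.res a) = 0 := w.spec_of_val_ne ha.ne'
  rcases lt_trichotomy (w.val b) 0 with hb | hb | hb
  · have vb := w.val_one_sub_of_neg hb
    rw [ft, sa, w.spec_of_val_ne (x := b) (by omega), w.spec_of_val_ne (x := b / a) (by omega),
      w.spec_of_val_ne (x := (1 - b) / (1 - a)) (by omega),
      w.spec_of_val_ne (x := a * (1 - b) / (b * (1 - a))) (by omega)]
    simp
  · have vb := w.val_one_sub_nonneg hb.ge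
    rw [ft, sa, w.spec_of_val_ne (x := b / a) (by omega),
      w.spec_of_val_ne (x := a * (1 - b) / (b * (1 - a))) (by omega),
      w.res_div h1b h1a vb va, ra, div_one, spec_one_sub]
    abel
  · have vb := w.val_one_sub_of_pos hb
    have rb : w.res (1 - b) = 1 := by
      rw [w.res_one_sub hb0 hb.le, w.res_of_val_ne hb.ne', sub_zero]
    -- both `a` and `b` specialize to `0`: the terms `b / a` and `(a / b) · unit` cancel
    have e : B2sym (w.res (a * (1 - b) / (b * (1 - a)))) = - B2sym (w.res (b / a)) := by
      by_cases hab : w.val a = w.val b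
      · rw [← spec_inv, inv_div, mul_div_mul_comm, w.res_mul' (div_ne_zero ha0 hb0)
          (div_ne_zero h1b h1a) (by rw [w.val_div ha0 hb0]; omega) (by omega),
          w.res_div h1b h1a (by omega) va, ra, rb, div_one, mul_one]
      · rw [w.spec_of_val_ne (x := b / a) (by omega),
          w.spec_of_val_ne (x := a * (1 - b) / (b * (1 - a))) (by omega), neg_zero]
    rw [ft, sa, e, w.spec_of_val_ne (x := b) (by omega), w.res_div h1b h1a (by omega) va, ra, rb,
      div_one, b2sym_one]
    abel

/-- If `a` specializes to one of `0`, `1`, `∞`, the `S₃`-symmetry reduces to the case `0`. -/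
lemma ft_spec_of_degenerate {a b : F} (ha0 : a ≠ 0) (ha1 : a ≠ 1) (hb0 : b ≠ 0) (hb1 : b ≠ 1)
    (h : w.val a ≠ 0 ∨ w.val (1 - a) ≠ 0) : ft (fun x => B2sym (w.res x)) a b = 0 := by
  rcases lt_trichotomy (w.val a) 0 with ha | ha | ha
  · have := w.ft_spec_of_pos (inv_ne_zero ha0) (inv_ne_one.2 ha1) (inv_ne_zero hb0)
      (inv_ne_one.2 hb1) (by rw [val_inv]; omega)
    rwa [w.ft_inv ha0 ha1 hb0 hb1, neg_eq_zero] at this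
  · have h1 := w.val_one_sub_nonneg ha.ge
    have := w.ft_spec_of_pos (sub_ne_zero.2 ha1.symm) (by simpa using ha0)
      (sub_ne_zero.2 hb1.symm) (by simpa using hb0)
      (a := 1 - a) (b := 1 - b) (by omega)
    rwa [ft_one_sub, neg_eq_zero] at this
  · exact w.ft_spec_of_pos ha0 ha1 hb0 hb1 ha

/-- The five-term relation specializes to `B₂(k_ν)`. -/
lemma ft_spec {a b : F} (ha0 : a ≠ 0) (ha1 : a ≠ 1) (hb0 : b ≠ 0) (hb1 : b ≠ 1) :
    ft (fun x => B2sym (w.res x)) a b = 0 := by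
  by_cases ha : w.val a ≠ 0 ∨ w.val (1 - a) ≠ 0
  · exact w.ft_spec_of_degenerate ha0 ha1 hb0 hb1 ha
  by_cases hb : w.val b ≠ 0 ∨ w.val (1 - b) ≠ 0
  · have := w.ft_spec_of_degenerate hb0 hb1 ha0 ha1 hb
    rwa [ft_swap, neg_eq_zero] at this
  push Not at ha hb
  obtain ⟨va, va1⟩ := ha
  obtain ⟨vb, vb1⟩ := hb
  have h1a : 1 - a ≠ 0 := sub_ne_zero.2 ha1.symm
  have h1b : 1 - b ≠ 0 := sub_ne_zero.2 hb1.symm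
  have e : ft (fun x => B2sym (w.res x)) a b = ft B2sym (w.res a) (w.res b) := by
    rw [ft, ft, w.res_div (mul_ne_zero ha0 h1b) (mul_ne_zero hb0 h1a)
      (by rw [w.val_mul ha0 h1b]; omega) (by rw [w.val_mul hb0 h1a]; omega),
      w.res_mul' ha0 h1b va.ge vb1.ge, w.res_mul' hb0 h1a vb.ge va1.ge,
      w.res_div h1b h1a vb1.ge va1, w.res_div hb0 ha0 vb.ge va, w.res_one_sub ha0 va.ge,
      w.res_one_sub hb0 vb.ge]
  have ra0 := w.res_ne_zero ha0 va
  have rb0 := w.res_ne_zero hb0 vb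
  have ra1 := w.res_ne_zero h1a va1
  have rb1 := w.res_ne_zero h1b vb1
  rw [w.res_one_sub ha0 va.ge] at ra1
  rw [w.res_one_sub hb0 vb.ge] at rb1
  rw [e]
  by_cases hab : w.res a = w.res b
  · rw [hab, ft, div_self (mul_ne_zero rb0 rb1), div_self rb1, div_self rb0]
    abel_nf
    exact b2sym_one
  · exact ft_b2sym _ _ ra0 (fun h => ra1 (by rw [h, sub_self])) rb0
      (fun h => rb1 (by rw [h, sub_self])) hab

/-- The specialization map `B₂(F) → B₂(k_ν)`, `{x}₂ ↦ {x̄}₂` for units `x` and `{x}₂ ↦ 0`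
otherwise. Since `res` vanishes outside the units, it sends every `{x}₂` to `{res x}₂`. -/
noncomputable def spec : B2 F →ₗ[ℚ] B2 K :=
  (fiveTermRel F).liftQ
    (Finsupp.linearCombination ℚ fun o : Option F => o.elim 0 fun x => B2sym (w.res x)) <| by
    refine Submodule.span_le.2 ?_
    rintro x (hx | ⟨z, hz, rfl⟩)
    · rcases hx with rfl | rfl | rfl <;>
        simp [w.res_zero, w.res_one, b2sym_zero, b2sym_one]
    · obtain ⟨a, b, ha0, ha1, hb0, hb1, -, e⟩ := fiveTerm_normalize z hz
      change fiveTerm z ∈ _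
      rw [e, SetLike.mem_coe, LinearMap.mem_ker, map_ft]
      simpa using w.ft_spec ha0 ha1 hb0 hb1

lemma spec_b2sym (x : F) : w.spec (B2sym x) = B2sym (w.res x) := by
  change Finsupp.linearCombination ℚ _ (Finsupp.single (some x) 1) = _
  simp

end Specialization

end DVF

end Residue

/-! ### Existence and uniqueness of the tame symbol on `B₂` -/

section TameB

variable {F K : Type*} [Field F] [Field K]

/-- Maps out of `B₂(F) ⊗ M` are determined by their values on `{x}₂ ⊗ b` with `x ≠ 0, 1`. -/
lemma b2_tensor_ext {M N : Type*} [AddCommGroup M] [Module ℚ M] [AddCommGroup N] [Module ℚ N]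
    {f g : (B2 F ⊗[ℚ] M) →ₗ[ℚ] N}
    (h : ∀ x : F, x ≠ 0 → x ≠ 1 → ∀ b : M, f (B2sym x ⊗ₜ b) = g (B2sym x ⊗ₜ b)) : f = g := by
  refine TensorProduct.ext (LinearMap.ext_on b2_span ?_)
  rintro _ ⟨x, rfl⟩
  ext b
  by_cases h0 : x = 0
  · simp [h0, b2sym_zero]
  by_cases h1 : x = 1
  · simp [h1, b2sym_one]
  exact h x h0 h1 b

/-- The two conditions characterizing `∂_ν^B` say exactly that it is `-(spec ⊗ ∂_ν)`. -/
lemma isTameSymbolB_iff [CharZero K] (w : DVF F K) (n : ℕ)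
    (D : Lambda (n+1) Fˣ →ₗ[ℚ] Lambda n Kˣ)
    (DB : (B2 F ⊗[ℚ] Lambda (n+1) Fˣ) →ₗ[ℚ] (B2 K ⊗[ℚ] Lambda n Kˣ)) :
    IsTameSymbolB w n D DB ↔ DB = - TensorProduct.map w.spec D := by
  constructor
  · rintro ⟨h1, h2⟩
    refine b2_tensor_ext fun x hx0 hx1 b => ?_
    rw [LinearMap.neg_apply, TensorProduct.map_tmul, w.spec_b2sym]
    by_cases hv : w.v (Units.mk0 x hx0) = 0
    · exact h2 (Units.mk0 x hx0) hv b
    · have h3 := w.val_unit (Units.mk0 x hx0)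
      rw [Units.val_mk0] at h3
      rw [w.res_of_val_ne (by rw [h3]; exact hv), b2sym_zero, TensorProduct.zero_tmul, neg_zero]
      exact h1 (Units.mk0 x hx0) hx1 hv b
  · rintro rfl
    refine ⟨fun a _ hv b => ?_, fun u _ b => ?_⟩
    · rw [LinearMap.neg_apply, TensorProduct.map_tmul, w.spec_b2sym,
        w.res_of_val_ne (by rw [w.val_unit]; exact hv), b2sym_zero, TensorProduct.zero_tmul,
        neg_zero]
    · rw [LinearMap.neg_apply, TensorProduct.map_tmul, w.spec_b2sym]

end TameB

/-! ### The tame symbol as a contraction followed by a specialization -/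

section Tame

variable {F K : Type*} [Field F] [Field K]

lemma toQ_mul {G : Type*} [CommGroup G] (x y : G) : toQ (x * y) = toQ x + toQ y := by
  simp only [toQ, ofMul_mul, TensorProduct.tmul_add]

lemma toQ_zpow {G : Type*} [CommGroup G] (x : G) (k : ℤ) : toQ (x ^ k) = (k : ℚ) • toQ x := by
  simp only [toQ, ofMul_zpow, TensorProduct.tmul_smul, Int.cast_smul_eq_zsmul]

lemma toQF_unit (x : Fˣ) : toQF (x : F) = toQ x := by
  rw [toQF, dif_neg x.ne_zero, Units.mk0_val]

lemma toQF_mul {x y : F} (hx : x ≠ 0) (hy : y ≠ 0) : toQF (x * y) = toQF x + toQF y := by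
  lift x to Fˣ using hx.isUnit
  lift y to Fˣ using hy.isUnit
  rw [← Units.val_mul, toQF_unit, toQF_unit, toQF_unit, toQ_mul]

lemma toQF_one : toQF (1 : F) = 0 := by
  have := toQF_mul (one_ne_zero (α := F)) one_ne_zero
  rwa [mul_one, left_eq_add] at this

/-- `-1` is torsion, so it dies in `Fˣ ⊗ ℚ`. -/
lemma toQF_neg_one : toQF (-1 : F) = 0 := by
  have h0 : (-1 : F) ≠ 0 := neg_ne_zero.2 one_ne_zero
  have := toQF_mul h0 h0
  rw [neg_mul_neg, mul_one, toQF_one, ← two_smul ℚ] at this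
  exact (smul_eq_zero.1 this.symm).resolve_left two_ne_zero

lemma toQ_span (G : Type*) [CommGroup G] : Submodule.span ℚ (Set.range (toQ : G → QW G)) = ⊤ := by
  rw [eq_top_iff]
  rintro x -
  induction x using TensorProduct.induction_on with
  | zero => exact Submodule.zero_mem _
  | add x y hx hy => exact Submodule.add_mem _ hx hy
  | tmul q g =>
    have : q ⊗ₜ[ℤ] g = q • toQ (Additive.toMul g) := by
      rw [toQ, TensorProduct.smul_tmul', smul_eq_mul, mul_one, ofMul_toMul]
    rw [this]
    exact Submodule.smul_mem _ _ (Submodule.subset_span ⟨_, rfl⟩)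

namespace DVF

variable (w : DVF F K)

/-- A chosen uniformizer. -/
noncomputable def unif : Fˣ := (w.v_surj 1).choose

lemma v_unif : w.v w.unif = 1 := (w.v_surj 1).choose_spec

/-- The valuation as an additive homomorphism. -/
def vHom : Additive Fˣ →+ ℤ where
  toFun x := w.v (Additive.toMul x)
  map_zero' := by
    have := w.v_mul 1 1
    rw [mul_one] at this
    exact (left_eq_add.1 this)
  map_add' x y := w.v_mul _ _

lemma v_zpow (x : Fˣ) (k : ℤ) : w.v (x ^ k) = k * w.v x := by
  have := map_zsmul w.vHom k (Additive.ofMul x)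
  simpa [vHom] using this

/-- The unit part `x π^{-ν(x)}` of `x`. -/
noncomputable def unitPart (x : Fˣ) : Fˣ := x * w.unif ^ (- w.v x)

lemma v_unitPart (x : Fˣ) : w.v (w.unitPart x) = 0 := by
  rw [unitPart, w.v_mul, v_zpow, v_unif]; ring

lemma unitPart_mul (x y : Fˣ) : w.unitPart (x * y) = w.unitPart x * w.unitPart y := by
  rw [unitPart, unitPart, unitPart, w.v_mul, neg_add, zpow_add, mul_mul_mul_comm]

lemma unitPart_of_unit {x : Fˣ} (hx : w.v x = 0) : w.unitPart x = x := by
  simp [unitPart, hx]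

lemma toQ_eq (x : Fˣ) : toQ x = (w.v x : ℚ) • toQ w.unif + toQ (w.unitPart x) := by
  rw [unitPart, toQ_mul, toQ_zpow]
  push_cast
  rw [neg_smul]
  abel

/-- The specialization homomorphism `Fˣ → k_νˣ` attached to the uniformizer `π`: the identity
on residues of units, and trivial on `π`. -/
noncomputable def sp : Fˣ →* Kˣ :=
  MonoidHom.mk' (fun x => Units.mk0 (w.res (w.unitPart x : F)) (w.res_unit _ (w.v_unitPart x))) <| by
    intro x y
    ext
    simp only [Units.val_mk0, Units.val_mul, unitPart_mul]
    exact w.res_mul _ _ (w.v_unitPart x).ge (w.v_unitPart y).ge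

lemma toQ_sp_of_unit {x : Fˣ} (hx : w.v x = 0) : toQ (w.sp x) = toQF (w.res (x : F)) := by
  rw [← toQF_unit]
  simp [sp, w.unitPart_of_unit hx]

/-- The valuation as a linear form on `Fˣ ⊗ ℚ`. -/
noncomputable def vQ : Module.Dual ℚ (QW Fˣ) :=
  (TensorProduct.AlgebraTensorModule.rid ℤ ℚ ℚ).toLinearMap ∘ₗ
    LinearMap.baseChange ℚ w.vHom.toIntLinearMap

lemma vQ_toQ (x : Fˣ) : w.vQ (toQ x) = w.v x := by
  simp [vQ, toQ, vHom]

/-- The explicit tame symbol on the whole exterior algebra: contraction with `ν`, followed by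
the specialization attached to a uniformizer. -/
noncomputable def tame : ExteriorAlgebra ℚ (QW Fˣ) →ₗ[ℚ] ExteriorAlgebra ℚ (QW Kˣ) :=
  (lamMap w.sp).toLinearMap ∘ₗ CliffordAlgebra.contractLeft w.vQ

lemma lamMap_ι_toQ (x : Fˣ) :
    lamMap w.sp (ExteriorAlgebra.ι ℚ (toQ x)) = ExteriorAlgebra.ι ℚ (toQ (w.sp x)) := by
  rw [lamMap, ExteriorAlgebra.map_apply_ι]
  rfl

lemma tame_ι_mul (x : Fˣ) (b : ExteriorAlgebra ℚ (QW Fˣ)) :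
    w.tame (ExteriorAlgebra.ι ℚ (toQ x) * b) =
      (w.v x : ℚ) • lamMap w.sp b - ExteriorAlgebra.ι ℚ (toQ (w.sp x)) * w.tame b := by
  have h : CliffordAlgebra.contractLeft w.vQ (ExteriorAlgebra.ι ℚ (toQ x) * b)
      = w.vQ (toQ x) • b - ExteriorAlgebra.ι ℚ (toQ x) * CliffordAlgebra.contractLeft w.vQ b :=
    CliffordAlgebra.contractLeft_ι_mul _ _ _
  rw [tame, LinearMap.comp_apply, h, vQ_toQ, map_sub, map_smul]
  simp only [AlgHom.toLinearMap_apply, map_mul, lamMap_ι_toQ, LinearMap.comp_apply]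

lemma tame_algebraMap (r : ℚ) : w.tame (algebraMap ℚ _ r) = 0 := by
  have h : CliffordAlgebra.contractLeft w.vQ (algebraMap ℚ (ExteriorAlgebra ℚ (QW Fˣ)) r) = 0 :=
    CliffordAlgebra.contractLeft_algebraMap _ _ _
  rw [tame, LinearMap.comp_apply, h, map_zero]

/-- A wedge of units has trivial tame symbol. -/
lemma tame_ιMulti_units {n : ℕ} (u : Fin n → Fˣ) (hu : ∀ i, w.v (u i) = 0) :
    w.tame (ExteriorAlgebra.ιMulti ℚ n fun i => toQ (u i)) = 0 := by
  induction n with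
  | zero =>
    rw [ExteriorAlgebra.ιMulti_zero_apply, ← map_one (algebraMap ℚ _), tame_algebraMap]
  | succ n ih =>
    rw [ExteriorAlgebra.ιMulti_succ_apply, tame_ι_mul, hu 0]
    have := ih (fun i => u i.succ) (fun i => hu _)
    simp only [Matrix.vecTail, Function.comp_def]
    rw [this]
    simp

/-- `Λ^{n+1}(Fˣ)` is spanned by the elements `x ∧ u₁ ∧ … ∧ u_n` with `u₁, …, u_n` units. -/
lemma exteriorPower_le_span (n : ℕ) :
    ⋀[ℚ]^(n+1) (QW Fˣ) ≤ Submodule.span ℚ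
      {z | ∃ (x : Fˣ) (u : Fin n → Fˣ), (∀ i, w.v (u i) = 0) ∧
        z = ExteriorAlgebra.ι ℚ (toQ x) * ExteriorAlgebra.ιMulti ℚ n fun i => toQ (u i)} := by
  obtain ⟨S, hS⟩ : ∃ S : Set (ExteriorAlgebra ℚ (QW Fˣ)),
    S = Set.range fun x : Fˣ => ExteriorAlgebra.ι ℚ (toQ x) := ⟨_, rfl⟩
  obtain ⟨T, hT⟩ : ∃ T : Set (ExteriorAlgebra ℚ (QW Fˣ)),
    T = {z | ∃ u : Fˣ, w.v u = 0 ∧ z = ExteriorAlgebra.ι ℚ (toQ u)} := ⟨_, rfl⟩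
  have hM : LinearMap.range (ExteriorAlgebra.ι ℚ (M := QW Fˣ)) = Submodule.span ℚ S := by
    rw [LinearMap.range_eq_map, ← toQ_span, Submodule.map_span, hS, ← Set.range_comp]
    rfl
  -- `x ∧ y = π ∧ (ν(x) y₀ - ν(y) x₀) + x₀ ∧ y₀` for `x = π^ν(x) x₀` and `y = π^ν(y) y₀`
  have hSS : Submodule.span ℚ S * Submodule.span ℚ S
      ≤ Submodule.span ℚ S * Submodule.span ℚ T := by
    rw [Submodule.span_mul_span, Submodule.span_le]
    rintro _ ⟨_, hx, _, hy, rfl⟩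
    rw [hS] at hx hy
    obtain ⟨x, rfl⟩ := hx
    obtain ⟨y, rfl⟩ := hy
    have mT : ∀ z : Fˣ, ExteriorAlgebra.ι ℚ (toQ (w.unitPart z)) ∈ Submodule.span ℚ T := by
      intro z
      refine Submodule.subset_span ?_
      rw [hT]
      exact ⟨_, w.v_unitPart z, rfl⟩
    have mS : ∀ z : Fˣ, ExteriorAlgebra.ι ℚ (toQ z) ∈ Submodule.span ℚ S := by
      intro z
      refine Submodule.subset_span ?_
      rw [hS]
      exact ⟨_, rfl⟩
    have e : ExteriorAlgebra.ι ℚ (toQ x) * ExteriorAlgebra.ι ℚ (toQ y)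
        = ExteriorAlgebra.ι ℚ (toQ w.unif) *
            ((w.v x : ℚ) • ExteriorAlgebra.ι ℚ (toQ (w.unitPart y))
              - (w.v y : ℚ) • ExteriorAlgebra.ι ℚ (toQ (w.unitPart x)))
          + ExteriorAlgebra.ι ℚ (toQ (w.unitPart x)) *
            ExteriorAlgebra.ι ℚ (toQ (w.unitPart y)) := by
      rw [w.toQ_eq x, w.toQ_eq y]
      have h1 := ExteriorAlgebra.ι_sq_zero (R := ℚ) (toQ w.unif)
      have h2 := eq_neg_of_add_eq_zero_left
        (ExteriorAlgebra.ι_add_mul_swap (R := ℚ) (toQ (w.unitPart x)) (toQ w.unif))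
      simp only [map_add, map_smul, add_mul, mul_add, smul_mul_assoc, mul_smul_comm, h1, h2,
        mul_sub, smul_zero]
      module
    refine (congrArg (· ∈ (Submodule.span ℚ S * Submodule.span ℚ T)) e).mpr ?_
    exact Submodule.add_mem _ (Submodule.mul_mem_mul (mS _)
      (Submodule.sub_mem _ (Submodule.smul_mem _ _ (mT _)) (Submodule.smul_mem _ _ (mT _))))
      (Submodule.mul_mem_mul (mS _) (mT _))
  have key : ∀ n : ℕ, Submodule.span ℚ S ^ (n+1)
      ≤ Submodule.span ℚ S * Submodule.span ℚ T ^ n := by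
    intro n
    induction n with
    | zero => simp
    | succ n ih =>
      calc Submodule.span ℚ S ^ (n+1+1) = Submodule.span ℚ S * Submodule.span ℚ S ^ (n+1) :=
            pow_succ' _ _
        _ ≤ Submodule.span ℚ S * (Submodule.span ℚ S * Submodule.span ℚ T ^ n) :=
            mul_le_mul' le_rfl ih
        _ = Submodule.span ℚ S * Submodule.span ℚ S * Submodule.span ℚ T ^ n :=
            (mul_assoc _ _ _).symm
        _ ≤ Submodule.span ℚ S * Submodule.span ℚ T * Submodule.span ℚ T ^ n :=
            mul_le_mul' hSS le_rfl
        _ = Submodule.span ℚ S * Submodule.span ℚ T ^ (n+1) := by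
            rw [mul_assoc, ← pow_succ']
  change LinearMap.range (ExteriorAlgebra.ι ℚ (M := QW Fˣ)) ^ (n+1) ≤ _
  rw [hM]
  refine (key n).trans ?_
  rw [Submodule.span_pow, Submodule.span_mul_span]
  refine Submodule.span_mono ?_
  rintro _ ⟨a, ha, b, hb, rfl⟩
  rw [hS] at ha
  obtain ⟨x, rfl⟩ := ha
  obtain ⟨f, rfl⟩ := Set.mem_pow.1 hb
  have hf : ∀ i, ∃ u : Fˣ, w.v u = 0 ∧
      (f i : ExteriorAlgebra ℚ (QW Fˣ)) = ExteriorAlgebra.ι ℚ (toQ u) := by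
    intro i
    obtain ⟨z, hz⟩ := f i
    rw [hT] at hz
    exact hz
  choose u hu hu' using hf
  refine ⟨x, u, hu, ?_⟩
  simp only [ExteriorAlgebra.ιMulti_apply, hu']

lemma amb_wedge_cons {n : ℕ} (x : Fˣ) (u : Fin n → Fˣ) :
    (wedge (Fin.cons (x : F) (fun i => (u i : F)))).amb =
      ExteriorAlgebra.ι ℚ (toQ x) * ExteriorAlgebra.ιMulti ℚ n fun i => toQ (u i) := by
  change ExteriorAlgebra.ιMulti ℚ (n+1) _ = _
  rw [ExteriorAlgebra.ιMulti_succ_apply]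
  simp only [Matrix.vecTail, Function.comp_def, Fin.cons_zero, Fin.cons_succ, toQF_unit]

/-- The tame symbol is unique: any map satisfying its characterization is the explicit one. -/
lemma tame_unique {n : ℕ} {D : Lambda (n+1) Fˣ →ₗ[ℚ] Lambda n Kˣ} (hD : IsTameSymbol w n D)
    (b : Lambda (n+1) Fˣ) : (D b).amb = w.tame b.amb := by
  have hsub : ∀ z ∈ {z | ∃ (x : Fˣ) (u : Fin n → Fˣ), (∀ i, w.v (u i) = 0) ∧
        z = ExteriorAlgebra.ι ℚ (toQ x) * ExteriorAlgebra.ιMulti ℚ n fun i => toQ (u i)},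
      ∃ h : z ∈ ⋀[ℚ]^(n+1) (QW Fˣ),
        (D (⟨z, h⟩ : Lambda (n+1) Fˣ)).amb = w.tame z := by
    rintro z ⟨x, u, hu, rfl⟩
    have e := amb_wedge_cons x u
    have hmem : ExteriorAlgebra.ι ℚ (toQ x) * ExteriorAlgebra.ιMulti ℚ n (fun i => toQ (u i))
        ∈ ⋀[ℚ]^(n+1) (QW Fˣ) := by
      rw [← e]
      exact (wedge (Fin.cons (x : F) (fun i => (u i : F)))).2
    refine ⟨hmem, ?_⟩
    have e2 : (⟨_, hmem⟩ : Lambda (n+1) Fˣ) = wedge (Fin.cons (x : F) (fun i => (u i : F))) :=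
      Subtype.ext e.symm
    rw [e2, hD x u hu, tame_ι_mul, w.tame_ιMulti_units u hu, mul_zero, sub_zero]
    change (w.v x : ℚ) • fw _ = _
    congr 1
    rw [fw, ExteriorAlgebra.ιMulti_apply, ExteriorAlgebra.ιMulti_apply, map_list_prod,
      List.map_ofFn]
    congr 2
    funext i
    simp only [Function.comp_apply]
    rw [lamMap_ι_toQ, w.toQ_sp_of_unit (hu i)]
  obtain ⟨z, hz⟩ := b
  have hspan := w.exteriorPower_le_span n hz
  obtain ⟨h, e⟩ : ∃ h : z ∈ ⋀[ℚ]^(n+1) (QW Fˣ),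
      (D (⟨z, h⟩ : Lambda (n+1) Fˣ)).amb = w.tame z := by
    clear hz
    induction hspan using Submodule.span_induction with
    | mem z hz => exact hsub z hz
    | zero =>
      refine ⟨Submodule.zero_mem _, ?_⟩
      rw [map_zero]
      exact congrArg Lambda.amb (map_zero D)
    | add x y _ _ hx hy =>
      obtain ⟨hx, ex⟩ := hx
      obtain ⟨hy, ey⟩ := hy
      refine ⟨Submodule.add_mem _ hx hy, ?_⟩
      rw [map_add, ← ex, ← ey]
      exact congrArg Lambda.amb (map_add D (⟨x, hx⟩ : Lambda (n+1) Fˣ) ⟨y, hy⟩)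
    | smul c x _ hx =>
      obtain ⟨hx, ex⟩ := hx
      refine ⟨Submodule.smul_mem _ c hx, ?_⟩
      rw [map_smul, ← ex]
      exact congrArg Lambda.amb (map_smul D c (⟨x, hx⟩ : Lambda (n+1) Fˣ))
  exact e

lemma fw_pair {E : Type*} [Field E] (a b : E) :
    fw ![a, b] = ExteriorAlgebra.ι ℚ (toQF a) * ExteriorAlgebra.ι ℚ (toQF b) := by
  rw [fw, ExteriorAlgebra.ιMulti_succ_apply, ExteriorAlgebra.ιMulti_succ_apply,
    ExteriorAlgebra.ιMulti_zero_apply, mul_one]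
  rfl

/-- The tame symbol of `a ∧ (1 - a) ∧ b` is `ā ∧ (1 - ā) ∧ ∂b` when `a` is a unit, and vanishes
otherwise. If `ā = 1` the right-hand side is `0` too, as `toQF 1 = 0`. -/
lemma tame_steinberg {a : F} (ha0 : a ≠ 0) (ha1 : a ≠ 1) (b : ExteriorAlgebra ℚ (QW Fˣ)) :
    w.tame (fw ![a, 1 - a] * b) =
      if w.val a = 0 then fw ![w.res a, 1 - w.res a] * w.tame b else 0 := by
  have h1a : 1 - a ≠ 0 := sub_ne_zero.2 ha1.symm
  obtain ⟨x, rfl⟩ := ha0.isUnit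
  obtain ⟨y, hy⟩ := h1a.isUnit
  have e : w.tame (fw ![(x : F), 1 - x] * b)
      = ExteriorAlgebra.ι ℚ ((w.v x : ℚ) • toQ (w.sp y) - (w.v y : ℚ) • toQ (w.sp x))
          * lamMap w.sp b
        + ExteriorAlgebra.ι ℚ (toQ (w.sp x)) * ExteriorAlgebra.ι ℚ (toQ (w.sp y)) * w.tame b := by
    rw [fw_pair, ← hy, toQF_unit, toQF_unit, mul_assoc, tame_ι_mul, tame_ι_mul, map_mul,
      lamMap_ι_toQ, map_sub, map_smul, map_smul, sub_mul, smul_mul_assoc, smul_mul_assoc, mul_sub,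
      mul_smul_comm, mul_assoc]
    abel
  rw [e, w.val_unit]
  have vy : w.val (1 - (x : F)) = w.v y := by rw [← hy, val_unit]
  have vx := w.val_unit x
  rcases lt_trichotomy (w.v x) 0 with hx | hx | hx
  · -- `(1 - x) / x` has residue `-1`, so `x` and `1 - x` have the same specialization
    have hvy : w.v y = w.v x := by
      rw [← vy, ← vx]; exact w.val_one_sub_of_neg (by omega)
    have hq : toQ (w.sp y) = toQ (w.sp x) := by
      have hv : w.v (y * x⁻¹) = 0 := by
        have h := w.v_mul (y * x⁻¹) x
        rw [inv_mul_cancel_right] at h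
        omega
      have h1 : ((y * x⁻¹ : Fˣ) : F) = -(1 - (x : F)⁻¹) := by
        have := x.ne_zero
        rw [Units.val_mul, hy, Units.val_inv_eq_inv_val]
        field_simp; ring
      have hxi : 0 < w.val (x : F)⁻¹ := by rw [val_inv]; omega
      have h1x : 1 - (x : F)⁻¹ ≠ 0 := by
        rw [← neg_ne_zero, ← h1]; exact Units.ne_zero _
      have h2 : w.res ((y * x⁻¹ : Fˣ) : F) = -1 := by
        rw [h1, neg_eq_neg_one_mul, w.res_mul' (neg_ne_zero.2 one_ne_zero) h1x
          (by rw [val_neg, val_one]) (w.val_one_sub_of_pos hxi).ge, res_neg_one,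
          w.res_one_sub (inv_ne_zero x.ne_zero) hxi.le, w.res_of_val_ne hxi.ne']
        ring
      have h3 := w.toQ_sp_of_unit hv
      rw [h2, toQF_neg_one] at h3
      have h4 : y = (y * x⁻¹) * x := by rw [inv_mul_cancel_right]
      rw [h4, map_mul, toQ_mul, h3, zero_add]
    rw [if_neg hx.ne, hvy, hq, sub_self, map_zero, zero_mul, ExteriorAlgebra.ι_sq_zero, zero_mul,
      add_zero]
  · rw [if_pos hx, hx, fw_pair]
    have hs := w.toQ_sp_of_unit hx
    have hvy : 0 ≤ w.v y := by rw [← vy]; exact w.val_one_sub_nonneg (by omega)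
    have hr : w.res (y : F) = 1 - w.res (x : F) := by
      rw [hy]; exact w.res_one_sub x.ne_zero (by omega)
    rcases hvy.eq_or_lt with h | h
    · rw [← h, hs, w.toQ_sp_of_unit h.symm, hr]
      simp
    · have h0 : w.res (x : F) = 1 := by
        rw [w.res_vanish y h] at hr
        exact (sub_eq_zero.1 hr.symm).symm
      rw [hs, h0, toQF_one]
      simp
  · have hvy : w.v y = 0 := by rw [← vy]; exact w.val_one_sub_of_pos (by omega)
    have hr : w.res (y : F) = 1 := by
      rw [hy, w.res_one_sub x.ne_zero (by omega), w.res_vanish x hx, sub_zero]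
    rw [if_neg hx.ne', w.toQ_sp_of_unit hvy, hr, toQF_one, hvy]
    simp

end DVF

end Tame

/-- Let `(F,ν)` be a discrete valuation field with `F` and `k_ν` of
characteristic `0`, and `n ≥ 1` (written `n+1`; for `n = 0` the statement is trivial since
`Λ^{−1} = 0`).  There is a unique ℚ-linear map
`∂_ν^B : B₂(F)⊗Λ^n(Fˣ) → B₂(k_ν)⊗Λ^{n−1}(k_νˣ)` such that (1) `∂_ν^B({a}₂⊗b) = 0` for
`a ∈ F∖{0,1}` with `ν(a) ≠ 0`, and (2) `∂_ν^B({u}₂⊗b) = −{ū}₂⊗∂_ν(b)` for `u` a unit.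
Moreover, for every `m ≥ 2` the pair `(∂_ν^B, ∂_ν)` anticommutes with the differentials:
`∂_ν(δ_m(x)) = −δ_{m−1}(∂_ν^B(x))` for `x ∈ B₂(F)⊗Λ^{m−2}(Fˣ)` (for `m = 2`, i.e. the
second conjunct below, the right-hand side is `0`; the third conjunct is the case
`m = j+3 ≥ 3`). -/
theorem tame_symbol_B_exists_unique (F K : Type*) [Field F] [Field K]
    [CharZero F] [CharZero K] (w : DVF F K) :
    (∀ (n : ℕ) (D : Lambda (n+1) Fˣ →ₗ[ℚ] Lambda n Kˣ), IsTameSymbol w n D →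
      ∃! DB : (B2 F ⊗[ℚ] Lambda (n+1) Fˣ) →ₗ[ℚ] (B2 K ⊗[ℚ] Lambda n Kˣ),
        IsTameSymbolB w n D DB) ∧
    (∀ (δF : (B2 F ⊗[ℚ] Lambda 0 Fˣ) →ₗ[ℚ] Lambda 2 Fˣ), IsDelta F 0 δF →
     ∀ (D : Lambda 2 Fˣ →ₗ[ℚ] Lambda 1 Kˣ), IsTameSymbol w 1 D →
     ∀ x : B2 F ⊗[ℚ] Lambda 0 Fˣ, D (δF x) = 0) ∧
    (∀ (j : ℕ)
       (δF : (B2 F ⊗[ℚ] Lambda (j+1) Fˣ) →ₗ[ℚ] Lambda (j+3) Fˣ), IsDelta F (j+1) δF →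
     ∀ (δK : (B2 K ⊗[ℚ] Lambda j Kˣ) →ₗ[ℚ] Lambda (j+2) Kˣ), IsDelta K j δK →
     ∀ (D : Lambda (j+3) Fˣ →ₗ[ℚ] Lambda (j+2) Kˣ), IsTameSymbol w (j+2) D →
     ∀ (Dlow : Lambda (j+1) Fˣ →ₗ[ℚ] Lambda j Kˣ), IsTameSymbol w j Dlow →
     ∀ (DB : (B2 F ⊗[ℚ] Lambda (j+1) Fˣ) →ₗ[ℚ] (B2 K ⊗[ℚ] Lambda j Kˣ)),
       IsTameSymbolB w j Dlow DB →
     ∀ x : B2 F ⊗[ℚ] Lambda (j+1) Fˣ, D (δF x) = - δK (DB x)) := by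
  refine ⟨fun n D _ => ⟨-TensorProduct.map w.spec D, (isTameSymbolB_iff w n D _).2 rfl,
    fun DB hDB => (isTameSymbolB_iff w n D DB).1 hDB⟩, ?_, ?_⟩
  · intro δF hδF D hD x
    suffices h : D ∘ₗ δF = 0 from LinearMap.congr_fun h x
    refine b2_tensor_ext fun a ha0 ha1 b => Subtype.ext ?_
    change (D (δF (B2sym a ⊗ₜ b))).amb = 0
    rw [w.tame_unique hD, hδF a ha0 ha1, w.tame_steinberg ha0 ha1]
    -- an element of `Λ^0` is a scalar, hence is killed by the contraction
    have hb : b.amb ∈ (1 : Submodule ℚ (ExteriorAlgebra ℚ (QW Fˣ))) := by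
      have h : b.amb ∈ LinearMap.range (ExteriorAlgebra.ι ℚ (M := QW Fˣ)) ^ 0 := b.2
      rwa [pow_zero] at h
    obtain ⟨r, hr⟩ := Submodule.mem_one.1 hb
    rw [← hr, w.tame_algebraMap, mul_zero, ite_self]
  · intro j δF hδF δK hδK D hD Dlow hDlow DB hDB x
    rw [(isTameSymbolB_iff w j Dlow DB).1 hDB]
    suffices h : D ∘ₗ δF = δK ∘ₗ TensorProduct.map w.spec Dlow by
      rw [LinearMap.neg_apply, map_neg, neg_neg]
      exact LinearMap.congr_fun h x
    refine b2_tensor_ext fun a ha0 ha1 b => Subtype.ext ?_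
    change (D (δF (B2sym a ⊗ₜ b))).amb = (δK (TensorProduct.map w.spec Dlow (B2sym a ⊗ₜ b))).amb
    rw [w.tame_unique hD, hδF a ha0 ha1, w.tame_steinberg ha0 ha1, TensorProduct.map_tmul,
      w.spec_b2sym]
    have amb_zero : (0 : Lambda (j+2) Kˣ).amb = 0 := rfl
    by_cases hv : w.val a = 0
    · rw [if_pos hv]
      by_cases h1 : w.res a = 1
      · rw [h1, b2sym_one, TensorProduct.zero_tmul, map_zero, amb_zero, DVF.fw_pair, toQF_one]
        simp
      · rw [hδK _ (w.res_ne_zero ha0 hv) h1, w.tame_unique hDlow]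
    · rw [if_neg hv, w.res_of_val_ne hv, b2sym_zero, TensorProduct.zero_tmul, map_zero, amb_zero]
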